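/- There exists a universal constant C such that every finite simple graph of treewidth strictly less than t, containing no complete binary tree of height h as a minor and no path on 2^b vertices as a subgraph, has treedepth at most C·t·h·b (for all positive integers t, h, b). -/

import Mathlib

/-- `G` contains a path on `ℓ` vertices as a subgraph: `ℓ` distinct vertices with
consecutive ones adjacent. -/
def HasPathOn {V : Type*} (G : SimpleGraph V) (ℓ : ℕ) : Prop :=
  ∃ f : Fin ℓ → V, Function.Injective f ∧
    ∀ (i : ℕ) (h : i + 1 < ℓ), G.Adj (f ⟨i, Nat.lt_of_succ_lt h⟩) (f ⟨i + 1, h⟩)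

/-- A forest order: a partial order in which the set of ancestors (predecessors)
of every element is a chain. Forest orders correspond to rooted forests, where
`le u v` means `u` is an ancestor of `v` (or `u = v`). -/
def IsForestOrder {V : Type*} (le : V → V → Prop) : Prop :=
  (∀ v, le v v) ∧ (∀ u v, le u v → le v u → u = v) ∧
  (∀ u v w, le u v → le v w → le u w) ∧
  (∀ u w v, le u v → le w v → le u w ∨ le w u)

/-- An elimination forest of `G`: a rooted forest on the vertices of `G` such that
for every edge, one endpoint is an ancestor of the other. -/
def IsElimForest {V : Type*} (G : SimpleGraph V) (le : V → V → Prop) : Prop :=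
  IsForestOrder le ∧ ∀ u v, G.Adj u v → le u v ∨ le v u

/-- The height of a rooted forest: the maximum number of vertices on a
root-to-leaf path, i.e. the maximum size of a set of ancestors of a vertex. -/
noncomputable def forestHeight {V : Type*} (le : V → V → Prop) : ℕ :=
  ⨆ v, {u | le u v}.ncard

/-- Treedepth: the minimum height of an elimination forest. -/
noncomputable def treedepth {V : Type*} (G : SimpleGraph V) : ℕ :=
  sInf { n | ∃ le : V → V → Prop, IsElimForest G le ∧ forestHeight le = n }

/-- A tree decomposition of `G`. -/
structure TreeDecomp {V : Type*} (G : SimpleGraph V) where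
  n : ℕ
  T : SimpleGraph (Fin n)
  isTree : T.IsTree
  bag : Fin n → Set V
  edge_bag : ∀ u v : V, G.Adj u v → ∃ t, u ∈ bag t ∧ v ∈ bag t
  subtree : ∀ v : V, (SimpleGraph.induce {t | v ∈ bag t} T).Connected

/-- The width of a tree decomposition: maximum bag size minus 1. -/
noncomputable def TreeDecomp.width {V : Type*} {G : SimpleGraph V} (D : TreeDecomp G) : ℕ :=
  (⨆ t, (D.bag t).ncard) - 1

/-- Treewidth: the minimum width of a tree decomposition. -/
noncomputable def treewidth {V : Type*} (G : SimpleGraph V) : ℕ :=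
  sInf { w | ∃ D : TreeDecomp G, D.width = w }

/-- `H` is a minor of `G`: there is a family of pairwise disjoint connected
branch sets in `G`, one for each vertex of `H`, with edges of `H` realized by
edges of `G` between the corresponding branch sets. -/
def IsMinor {W V : Type*} (H : SimpleGraph W) (G : SimpleGraph V) : Prop :=
  ∃ f : W → Set V,
    (∀ w, (SimpleGraph.induce (f w) G).Connected) ∧
    (Pairwise fun w w' => Disjoint (f w) (f w')) ∧
    (∀ w w', H.Adj w w' → ∃ u ∈ f w, ∃ v ∈ f w', G.Adj u v)

/-- The complete binary tree of height `h`: vertices are binary strings of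
length `< h`, each vertex `l` of length `< h - 1` has two children `l ++ [b]`. -/
def completeBinaryTree (h : ℕ) : SimpleGraph {l : List Bool // l.length < h} :=
  SimpleGraph.fromRel (fun u v => ∃ b : Bool, (v : List Bool) = (u : List Bool) ++ [b])

/-!
Treedepth is bounded through vertex rankings: colourings by `0, …, n - 1` in which the largest
colour on any connected set is attained only once. Deleting a set `X` of vertices costs at most
`|X|` colours, and the components of what remains are ranked independently.

Call a connected set `0`-branching, and call it `(h + 1)`-branching if it contains three disjoint
`h`-branching sets, none of which separates the other two inside it. An `h`-branching set contains a
complete binary tree of height `h + 1` as a minor: grow the root branch set from any vertex until it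
meets one of the three sets, swallow that set, and recurse into the other two.

Let `U` be connected but not `(h + 1)`-branching. Among any three disjoint `h`-branching subsets of
`U` one separates the other two, so the sets of a packing of such subsets lie in a row, every one of
them separating the two extreme ones. A path between the extreme sets meets all of them, hence a
packing has fewer than `2 ^ b` members. Some bag of the tree decomposition splits `U` into
components whose packing numbers are at most half that of `U`; so after removing `b` bags in
succession no `h`-branching set is left. Thus `t * b` colours are spent on each of the `h` levels.
-/

/-! ### Reachability inside a vertex set -/

section Reachability

variable {V : Type*} {G : SimpleGraph V} {S S' X Y A B : Set V} {u v w : V}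

/-- `u` and `v` are joined by a walk of `G` all of whose vertices lie in `S`; in particular both
of them lie in `S`. -/
def ReachableIn (G : SimpleGraph V) (S : Set V) (u v : V) : Prop :=
  ∃ p : G.Walk u v, ∀ x ∈ p.support, x ∈ S

/-- The vertex set of the connected component of `u` in `G[S]`; it is empty when `u ∉ S`. -/
def componentIn (G : SimpleGraph V) (S : Set V) (u : V) : Set V := {v | ReachableIn G S u v}

/-- Some walk inside `S` joins `A` to `B`. So `¬ Linked G (S \ X) A B` says that `X` separates `A`
from `B` in `G[S]`. -/
def Linked (G : SimpleGraph V) (S A B : Set V) : Prop := ∃ a ∈ A, ∃ b ∈ B, ReachableIn G S a b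

namespace ReachableIn

theorem refl (hu : u ∈ S) : ReachableIn G S u u := ⟨.nil, by simpa using hu⟩

theorem mem_left : ReachableIn G S u v → u ∈ S
  | ⟨p, hp⟩ => hp u p.start_mem_support

theorem mem_right : ReachableIn G S u v → v ∈ S
  | ⟨p, hp⟩ => hp v p.end_mem_support

theorem symm : ReachableIn G S u v → ReachableIn G S v u
  | ⟨p, hp⟩ => ⟨p.reverse, by simpa using hp⟩

theorem trans : ReachableIn G S u v → ReachableIn G S v w → ReachableIn G S u w
  | ⟨p, hp⟩, ⟨q, hq⟩ => ⟨p.append q, fun x hx =>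
      ((SimpleGraph.Walk.mem_support_append_iff p q).1 hx).elim (hp x) (hq x)⟩

theorem mono (hS : S ⊆ S') : ReachableIn G S u v → ReachableIn G S' u v
  | ⟨p, hp⟩ => ⟨p, fun x hx => hS (hp x hx)⟩

theorem of_adj (huv : G.Adj u v) (hu : u ∈ S) (hv : v ∈ S) : ReachableIn G S u v :=
  ⟨huv.toWalk, by simp [hu, hv]⟩

theorem exists_adj_of_notMem_of_mem (h : ReachableIn G S u v) (hu : u ∉ X) (hv : v ∈ X) :
    ∃ z, ReachableIn G (S \ X) u z ∧ ∃ x ∈ X, G.Adj z x := by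
  obtain ⟨p, hp⟩ := h
  induction p with
  | nil => exact absurd hv hu
  | @cons u w v huw p ih =>
    simp only [SimpleGraph.Walk.support_cons, List.forall_mem_cons] at hp
    have huSX : u ∈ S \ X := ⟨hp.1, hu⟩
    by_cases hw : w ∈ X
    · exact ⟨u, refl huSX, w, hw, huw⟩
    · obtain ⟨z, hwz, hz⟩ := ih hw hv hp.2
      exact ⟨z, (of_adj huw huSX hwz.mem_left).trans hwz, hz⟩

theorem exists_mem_reachableIn_diff {ι : Type*} {A : ι → Set V}
    (hA : Pairwise (Function.onFun Disjoint A)) {i : ι} (h : ReachableIn G S u v) (hv : v ∈ A i) :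
    ∃ k, ∃ c ∈ A k, ReachableIn G (S \ ⋃ j ≠ k, A j) u c := by
  obtain ⟨p, hp⟩ := h
  induction p with
  | @nil u =>
    refine ⟨i, u, hv, refl ⟨hp u (by simp), ?_⟩⟩
    simpa using fun j hj => Set.disjoint_right.1 (hA hj) hv
  | @cons u w v huw p ih =>
    simp only [SimpleGraph.Walk.support_cons, List.forall_mem_cons] at hp
    by_cases hu : ∃ k, u ∈ A k
    · obtain ⟨k, hk⟩ := hu
      refine ⟨k, u, hk, refl ⟨hp.1, ?_⟩⟩
      simpa using fun j hj => Set.disjoint_right.1 (hA hj) hk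
    · obtain ⟨k, c, hc, hwc⟩ := ih hv hp.2
      have hmem : u ∈ S \ ⋃ j ≠ k, A j := ⟨hp.1, by simpa using fun j _ hj => hu ⟨j, hj⟩⟩
      exact ⟨k, c, hc, (of_adj huw hmem hwc.mem_left).trans hwc⟩

theorem of_connected_induce (hS : (G.induce S).Connected) (hu : u ∈ S) (hv : v ∈ S) :
    ReachableIn G S u v := by
  obtain ⟨p⟩ := hS.preconnected ⟨u, hu⟩ ⟨v, hv⟩
  refine ⟨p.map (SimpleGraph.Embedding.induce S).toHom, fun x hx => ?_⟩
  obtain ⟨y, -, rfl⟩ := List.mem_map.1 (SimpleGraph.Walk.support_map _ p ▸ hx)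
  exact y.2

end ReachableIn

theorem componentIn_subset : componentIn G S u ⊆ S := fun _ => ReachableIn.mem_right

theorem componentIn_mono (hS : S ⊆ S') : componentIn G S u ⊆ componentIn G S' u :=
  fun _ => ReachableIn.mono hS

theorem ReachableIn.componentIn_eq (h : ReachableIn G S u v) :
    componentIn G S u = componentIn G S v :=
  Set.ext fun _ => ⟨h.symm.trans, h.trans⟩

theorem connected_induce_componentIn (hu : u ∈ S) :
    (G.induce (componentIn G S u)).Connected := by
  classical
  refine SimpleGraph.induce_connected_of_patches u (.refl hu) fun {v} ⟨p, hp⟩ => ?_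
  refine ⟨{x | x ∈ p.support}, fun x hx => ?_, p.start_mem_support, p.end_mem_support,
    p.connected_induce_support.preconnected _ _⟩
  exact ⟨p.takeUntil x hx, fun y hy => hp y (p.support_takeUntil_subset_support hx hy)⟩

theorem ReachableIn.reachableIn_componentIn (h : ReachableIn G S u v) :
    ReachableIn G (componentIn G S u) u v :=
  .of_connected_induce (connected_induce_componentIn h.mem_left) (.refl h.mem_left) h

theorem Linked.symm : Linked G S A B → Linked G S B A
  | ⟨a, ha, b, hb, h⟩ => ⟨b, hb, a, ha, h.symm⟩

theorem not_linked_diff_left : ¬ Linked G (S \ A) A B :=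
  fun ⟨_, ha, _, _, h⟩ => h.mem_left.2 ha

theorem Linked.diff_or_linked (h : Linked G (S \ X) A B) :
    Linked G (S \ Y) A B ∨ Linked G (S \ X) A Y := by
  classical
  obtain ⟨a, ha, b, hb, p, hp⟩ := h
  by_cases hY : ∃ y ∈ p.support, y ∈ Y
  · obtain ⟨y, hy, hyY⟩ := hY
    exact .inr ⟨a, ha, y, hyY, p.takeUntil y hy,
      fun x hx => hp x (p.support_takeUntil_subset_support hy hx)⟩
  · exact .inl ⟨a, ha, b, hb, p, fun x hx => ⟨(hp x hx).1, fun hxY => hY ⟨x, hx, hxY⟩⟩⟩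

theorem Linked.exists_adj_componentIn (h : Linked G S A B) (hAB : Disjoint A B)
    (hS : S \ B ⊆ S') (hA : A ⊆ componentIn G S' v) :
    ∃ u ∈ componentIn G S' v, ∃ b ∈ B, G.Adj u b := by
  obtain ⟨a, ha, b, hb, hab⟩ := h
  obtain ⟨z, haz, x, hx, hzx⟩ :=
    hab.exists_adj_of_notMem_of_mem (Set.disjoint_left.1 hAB ha) hb
  exact ⟨z, (hA ha).trans (haz.mono hS), x, hx, hzx⟩

end Reachability

/-! ### Vertex rankings -/

section Ranking

variable {V : Type*} {G : SimpleGraph V} {S : Set V} {c : V → ℕ} {m n : ℕ}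

/-- `c` is a vertex ranking of `G[S]` with `n` colours: every walk in `G[S]` between two distinct
vertices of the same colour passes through a larger colour. -/
structure IsRanking (G : SimpleGraph V) (S : Set V) (n : ℕ) (c : V → ℕ) : Prop where
  lt : ∀ v ∈ S, c v < n
  eq_of_reachableIn : ∀ ⦃u v⦄, ReachableIn G {w ∈ S | c w ≤ c u} u v → c u = c v → u = v

/-- `G[S]` has a vertex ranking with `n` colours, which amounts to treedepth at most `n`. -/
def HasRanking (G : SimpleGraph V) (S : Set V) (n : ℕ) : Prop := ∃ c, IsRanking G S n c

/-- The ancestor relation of the rooted forest of a vertex ranking `c`: the descendants of `u` are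
the vertices reachable from `u` through colours at most `c u`. -/
def rankingLE (G : SimpleGraph V) (c : V → ℕ) (u v : V) : Prop :=
  ReachableIn G {w | c w ≤ c u} u v

theorem IsRanking.eq_of_rankingLE (hc : IsRanking G Set.univ n c) {u v : V}
    (huv : rankingLE G c u v) (h : c u = c v) : u = v :=
  hc.eq_of_reachableIn (by simpa [rankingLE] using huv) h

theorem rankingLE_of_le_of_common_descendant {u v w : V} (huv : rankingLE G c u v)
    (hwv : rankingLE G c w v) (huw : c u ≤ c w) : rankingLE G c w u :=
  hwv.trans (huv.symm.mono fun _ hx => le_trans hx huw)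

theorem IsRanking.isElimForest (hc : IsRanking G Set.univ n c) :
    IsElimForest G (rankingLE G c) := by
  refine ⟨⟨fun v => .refl (le_refl (c v)), fun u v huv hvu => ?_, fun u v w huv hvw => ?_,
    fun u w v huv hwv => ?_⟩, fun u v huv => ?_⟩
  · exact hc.eq_of_rankingLE huv (le_antisymm hvu.mem_right huv.mem_right)
  · have hle : c v ≤ c u := huv.mem_right
    exact huv.trans (ReachableIn.mono (fun _ hx => le_trans hx hle) hvw)
  · exact (le_total (c u) (c w)).symm.imp (rankingLE_of_le_of_common_descendant hwv huv)
      (rankingLE_of_le_of_common_descendant huv hwv)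
  · exact (le_total (c u) (c v)).symm.imp (.of_adj huv (le_refl (c u)))
      (.of_adj huv.symm (le_refl (c v)))

theorem IsRanking.ncard_rankingLE_le (hc : IsRanking G Set.univ n c) (v : V) :
    {u | rankingLE G c u v}.ncard ≤ n := by
  have hinj : Set.InjOn c {u | rankingLE G c u v} := fun u hu w hw huw =>
    (hc.eq_of_rankingLE (rankingLE_of_le_of_common_descendant hu hw huw.le) huw.symm).symm
  simpa using Set.ncard_le_ncard_of_injOn (t := Set.Iio n) c (fun u _ => hc.lt u trivial) hinj

theorem HasRanking.treedepth_le (h : HasRanking G Set.univ n) : treedepth G ≤ n := by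
  obtain ⟨c, hc⟩ := h
  calc treedepth G ≤ forestHeight (rankingLE G c) := Nat.sInf_le ⟨_, hc.isElimForest, rfl⟩
    _ ≤ n := ciSup_le' hc.ncard_rankingLE_le

theorem HasRanking.mono (h : HasRanking G S m) (hmn : m ≤ n) : HasRanking G S n := by
  obtain ⟨c, hc⟩ := h
  exact ⟨c, fun v hv => (hc.lt v hv).trans_le hmn, hc.eq_of_reachableIn⟩

theorem hasRanking_empty (G : SimpleGraph V) (n : ℕ) : HasRanking G ∅ n :=
  ⟨fun _ => 0, fun _ hv => hv.elim, fun _ _ h => h.mem_left.1.elim⟩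

theorem HasRanking.of_diff {X : Set V} (hX : X.Finite) (h : HasRanking G (S \ X) n) :
    HasRanking G S (n + X.ncard) := by
  classical
  obtain ⟨c, hc⟩ := h
  have := hX.to_subtype
  let e : X ≃ Fin X.ncard := Finite.equivFin X
  let c' : V → ℕ := fun v => if hv : v ∈ X then n + e ⟨v, hv⟩ else c v
  have c'_of_mem : ∀ {v} (hv : v ∈ X), c' v = n + e ⟨v, hv⟩ := fun hv => dif_pos hv
  have c'_of_notMem : ∀ {v}, v ∉ X → c' v = c v := fun hv => dif_neg hv
  have c'_lt_iff : ∀ {v}, v ∈ S → (c' v < n ↔ v ∉ X) := fun {v} hvS =>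
    ⟨fun hlt hv => by rw [c'_of_mem hv] at hlt; omega,
      fun hv => (c'_of_notMem hv).trans_lt (hc.lt v ⟨hvS, hv⟩)⟩
  refine ⟨c', fun v hvS => ?_, fun u v huv hcuv => ?_⟩
  · by_cases hv : v ∈ X
    · rw [c'_of_mem hv]
      exact Nat.add_lt_add_left (e ⟨v, hv⟩).2 n
    · exact ((c'_lt_iff hvS).2 hv).trans_le (Nat.le_add_right _ _)
  have huS := huv.mem_left.1
  have hvS := huv.mem_right.1
  by_cases hu : u ∈ X
  · have hv : v ∈ X := by
      by_contra hv
      exact (c'_lt_iff huS).1 (hcuv ▸ (c'_lt_iff hvS).2 hv) hu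
    rw [c'_of_mem hu, c'_of_mem hv, Nat.add_left_cancel_iff, ← Fin.ext_iff] at hcuv
    exact congrArg Subtype.val (e.injective hcuv)
  · have hlt : c' u < n := (c'_lt_iff huS).2 hu
    have hv : v ∉ X := (c'_lt_iff hvS).1 (hcuv ▸ hlt)
    rw [c'_of_notMem hu, c'_of_notMem hv] at hcuv
    refine hc.eq_of_reachableIn (huv.mono ?_) hcuv
    rintro w ⟨hwS, hwu⟩
    have hw : w ∉ X := (c'_lt_iff hwS).1 (hwu.trans_lt hlt)
    exact ⟨⟨hwS, hw⟩, by rwa [c'_of_notMem hu, c'_of_notMem hw] at hwu⟩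

theorem HasRanking.of_componentIn (h : ∀ u ∈ S, HasRanking G (componentIn G S u) n) :
    HasRanking G S n := by
  have hK : ∀ K : Set V, (∃ u ∈ S, componentIn G S u = K) → HasRanking G K n := by
    rintro _ ⟨u, hu, rfl⟩
    exact h u hu
  choose! c hc using hK
  have hcomp : ∀ u ∈ S, IsRanking G (componentIn G S u) n (c (componentIn G S u)) :=
    fun u hu => hc _ ⟨u, hu, rfl⟩
  refine ⟨fun v => c (componentIn G S v) v, fun v hv => (hcomp v hv).lt v (.refl hv), ?_⟩
  rintro u v huv hcuv
  have huS := huv.mem_left.1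
  rw [← (huv.mono (Set.sep_subset _ _)).componentIn_eq] at hcuv
  refine (hcomp u huS).eq_of_reachableIn (huv.reachableIn_componentIn.mono fun w hw => ?_) hcuv
  have huw : ReachableIn G S u w := hw.mono (Set.sep_subset _ _)
  have hle : c (componentIn G S w) w ≤ c (componentIn G S u) u := hw.mem_right.2
  exact ⟨huw, by rwa [← huw.componentIn_eq] at hle⟩

end Ranking

/-! ### Complete binary trees in branching sets -/

section Branching

variable {V : Type*} {G : SimpleGraph V} {U : Set V} {h : ℕ}

/-- An `h`-branching vertex set: a connected set which, for `h > 0`, contains three disjoint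
`(h - 1)`-branching sets none of which separates the other two inside it. -/
inductive IsBranching (G : SimpleGraph V) : ℕ → Set V → Prop
  | zero {U : Set V} (connected : (G.induce U).Connected) : IsBranching G 0 U
  | succ {h : ℕ} {U : Set V} (connected : (G.induce U).Connected) (A : Fin 3 → Set V)
      (subset : ∀ i, A i ⊆ U) (branching : ∀ i, IsBranching G h (A i))
      (disjoint : Pairwise (Function.onFun Disjoint A))
      (linked : ∀ i j k, i ≠ j → k ≠ i → k ≠ j → Linked G (U \ A k) (A i) (A j)) :
      IsBranching G (h + 1) U

theorem IsBranching.connected (hU : IsBranching G h U) : (G.induce U).Connected := by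
  cases hU <;> assumption

theorem IsBranching.nonempty (hU : IsBranching G h U) : U.Nonempty :=
  Set.nonempty_coe_sort.1 hU.connected.nonempty

/-- The sets `f l`, for binary strings `l` of length at most `h`, are the branch sets of a minor
model in `G[U]` of the complete binary tree of height `h + 1`, and `v` lies in the root branch set.
The values of `f` on longer strings are irrelevant. -/
structure IsBinaryTreeModel (G : SimpleGraph V) (h : ℕ) (U : Set V) (v : V)
    (f : List Bool → Set V) : Prop where
  root_mem : v ∈ f []
  subset : ∀ l, l.length ≤ h → f l ⊆ U
  connected : ∀ l, l.length ≤ h → (G.induce (f l)).Connected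
  disjoint : ∀ l l', l.length ≤ h → l'.length ≤ h → l ≠ l' → Disjoint (f l) (f l')
  exists_adj : ∀ l b, l.length < h → ∃ u ∈ f l, ∃ w ∈ f (l ++ [b]), G.Adj u w

theorem IsBinaryTreeModel.isMinor {v : V} {f : List Bool → Set V}
    (hf : IsBinaryTreeModel G h U v f) : IsMinor (completeBinaryTree (h + 1)) G := by
  refine ⟨fun l => f l, fun l => hf.connected l (Nat.lt_succ_iff.1 l.2), fun l l' hne => ?_, ?_⟩
  · exact hf.disjoint l l' (Nat.lt_succ_iff.1 l.2) (Nat.lt_succ_iff.1 l'.2)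
      (Subtype.coe_injective.ne hne)
  · rintro ⟨l, hl⟩ ⟨l', hl'⟩ hadj
    rcases ((SimpleGraph.fromRel_adj _ _ _).1 hadj).2 with ⟨b, rfl : l' = l ++ [b]⟩ |
      ⟨b, rfl : l = l' ++ [b]⟩
    · exact hf.exists_adj l b (by simpa using hl')
    · obtain ⟨u, hu, w, hw, huw⟩ := hf.exists_adj l' b (by simpa using hl)
      exact ⟨w, hw, u, hu, huw.symm⟩

theorem IsBinaryTreeModel.graft {R : Set V} {v : V} {A : Bool → Set V} {a : Bool → V}
    {f : Bool → List Bool → Set V} (hf : ∀ b, IsBinaryTreeModel G h (A b) (a b) (f b))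
    (hA : Pairwise (Function.onFun Disjoint A)) (hAU : ∀ b, A b ⊆ U) (hRU : R ⊆ U)
    (hRA : ∀ b, Disjoint R (A b)) (hR : (G.induce R).Connected) (hv : v ∈ R)
    (hadj : ∀ b, ∃ r ∈ R, G.Adj r (a b)) :
    ∃ F, IsBinaryTreeModel G (h + 1) U v F := by
  let F : List Bool → Set V
    | [] => R
    | b :: l => f b l
  have hF : ∀ b (l : List Bool), (b :: l).length ≤ h + 1 → F (b :: l) ⊆ A b :=
    fun b l hl => (hf b).subset l (by simpa using hl)
  refine ⟨F, hv, ?_, ?_, ?_, ?_⟩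
  · rintro (_ | ⟨b, l⟩) hl
    · exact hRU
    · exact (hF b l hl).trans (hAU b)
  · rintro (_ | ⟨b, l⟩) hl
    · exact hR
    · exact (hf b).connected l (by simpa using hl)
  · rintro (_ | ⟨b, l⟩) (_ | ⟨b', l'⟩) hl hl' hne
    · exact absurd rfl hne
    · exact (hRA b').mono_right (hF b' l' hl')
    · exact ((hRA b).mono_right (hF b l hl)).symm
    · rcases eq_or_ne b b' with rfl | hb
      · exact (hf b).disjoint l l' (by simpa using hl) (by simpa using hl') (by simpa using hne)
      · exact (hA hb).mono (hF b l hl) (hF b' l' hl')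
  · rintro (_ | ⟨b, l⟩) b' hl
    · obtain ⟨r, hr, hra⟩ := hadj b'
      exact ⟨r, hr, a b', (hf b').root_mem, hra⟩
    · exact (hf b).exists_adj l b' (by simpa using hl)

theorem subset_componentIn_of_mem {A S : Set V} {v c : V} (hA : (G.induce A).Connected)
    (hAS : A ⊆ S) (hcA : c ∈ A) (hvc : ReachableIn G S v c) : A ⊆ componentIn G S v :=
  fun _ hx => hvc.trans ((ReachableIn.of_connected_induce hA hcA hx).mono hAS)

theorem exists_connected_adj_of_linked {A : Fin 3 → Set V} {v : V}
    (hU : (G.induce U).Connected) (hAU : ∀ i, A i ⊆ U) (hA : ∀ i, (G.induce (A i)).Connected)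
    (hdisj : Pairwise (Function.onFun Disjoint A))
    (hlinked : ∀ i j k, i ≠ j → k ≠ i → k ≠ j → Linked G (U \ A k) (A i) (A j)) (hv : v ∈ U) :
    ∃ k, ∃ R ⊆ U, (G.induce R).Connected ∧ v ∈ R ∧
      ∀ j ≠ k, Disjoint R (A j) ∧ ∃ a ∈ A j, ∃ r ∈ R, G.Adj r a := by
  obtain ⟨⟨a₀, ha₀⟩⟩ := (hA 0).nonempty
  have hva₀ : ReachableIn G U v a₀ := .of_connected_induce hU hv (hAU 0 ha₀)
  obtain ⟨k, c, hc, hvc⟩ := hva₀.exists_mem_reachableIn_diff hdisj ha₀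
  set S := U \ ⋃ j ≠ k, A j
  have hroot : A k ⊆ componentIn G S v :=
    subset_componentIn_of_mem (hA k) (fun x hx => ⟨hAU k hx, by
      simpa using fun j hj => Set.disjoint_right.1 (hdisj hj) hx⟩) hc hvc
  refine ⟨k, componentIn G S v, componentIn_subset.trans Set.sdiff_subset,
    connected_induce_componentIn hvc.mem_left, .refl hvc.mem_left, fun j hj => ⟨?_, ?_⟩⟩
  · exact Set.disjoint_left.2 fun x hx hxA =>
      (componentIn_subset hx).2 (Set.mem_biUnion hj hxA)
  · obtain ⟨l, hlk, hlj, hcover⟩ : ∃ l, l ≠ k ∧ l ≠ j ∧ ∀ i ≠ k, i = j ∨ i = l :=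
      (by decide : ∀ k j : Fin 3, j ≠ k → ∃ l, l ≠ k ∧ l ≠ j ∧ ∀ i ≠ k, i = j ∨ i = l) k j hj
    have hsub : (U \ A l) \ A j ⊆ S := by
      rintro x ⟨⟨hxU, hxl⟩, hxj⟩
      refine ⟨hxU, ?_⟩
      simp only [Set.mem_iUnion, not_exists]
      intro i hi
      rcases hcover i hi with rfl | rfl <;> assumption
    obtain ⟨r, hr, a, ha, hra⟩ := (hlinked k j l hj.symm hlk hlj).exists_adj_componentIn
      (hdisj hj.symm) hsub hroot
    exact ⟨a, ha, r, hr, hra⟩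

theorem IsBranching.exists_isBinaryTreeModel (hU : IsBranching G h U) :
    ∀ v ∈ U, ∃ f, IsBinaryTreeModel G h U v f := by
  induction hU with
  | @zero U hU =>
    intro v hv
    refine ⟨fun _ => U, hv, fun _ _ => subset_rfl, fun _ _ => hU, fun l l' hl hl' hne => ?_,
      fun _ _ hl => absurd hl (Nat.not_lt_zero _)⟩
    rw [Nat.le_zero, List.length_eq_zero_iff] at hl hl'
    exact absurd (hl.trans hl'.symm) hne
  | @succ h U hU A hAU hA hdisj hlinked ih =>
    intro v hv
    obtain ⟨k, R, hRU, hR, hvR, hRA⟩ := exists_connected_adj_of_linked hU hAU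
      (fun i => (hA i).connected) hdisj hlinked hv
    obtain ⟨child, hinj, hchild⟩ : ∃ child : Bool → Fin 3, child.Injective ∧ ∀ b, child b ≠ k :=
      (by decide : ∀ k : Fin 3, ∃ child : Bool → Fin 3, child.Injective ∧ ∀ b, child b ≠ k) k
    choose a haA hadj using fun b => (hRA (child b) (hchild b)).2
    choose f hf using fun b => ih (child b) (a b) (haA b)
    exact IsBinaryTreeModel.graft hf (hdisj.comp_of_injective hinj) (fun _ => hAU _) hRU
      (fun b => (hRA _ (hchild b)).1) hR hvR hadj

theorem IsBranching.isMinor (hU : IsBranching G h U) :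
    IsMinor (completeBinaryTree (h + 1)) G := by
  obtain ⟨v, hv⟩ := hU.nonempty
  obtain ⟨f, hf⟩ := hU.exists_isBinaryTreeModel v hv
  exact hf.isMinor

end Branching

/-! ### Packings of branching sets and long paths -/

section Packing

variable {V : Type*} {G : SimpleGraph V} {U : Set V} {h n : ℕ}

/-- `F` is a finite family of pairwise disjoint subsets of `U`, each satisfying `P`. -/
structure IsPacking (P : Set V → Prop) (U : Set V) (F : Finset (Set V)) : Prop where
  prop : ∀ A ∈ F, P A
  subset : ∀ A ∈ F, A ⊆ U
  disjoint : (F : Set (Set V)).PairwiseDisjoint id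

theorem HasPathOn.mono {m : ℕ} (hn : HasPathOn G n) (hmn : m ≤ n) : HasPathOn G m := by
  obtain ⟨f, hf, hadj⟩ := hn
  exact ⟨f ∘ Fin.castLE hmn, hf.comp (Fin.castLE_injective hmn),
    fun i hi => hadj i (hi.trans_le hmn)⟩

theorem hasPathOn_length_succ {u v : V} {p : G.Walk u v} (hp : p.IsPath) :
    HasPathOn G (p.length + 1) :=
  ⟨fun i => p.getVert i,
    fun i j hij => Fin.ext (hp.getVert_injOn (Nat.lt_succ_iff.1 i.2) (Nat.lt_succ_iff.1 j.2) hij),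
    fun _ hi => p.adj_getVert_succ (Nat.lt_of_succ_lt_succ hi)⟩

/-- `between a x b` reads "`x` lies between `a` and `b`". -/
theorem exists_forall_between {α : Type*} {between : α → α → α → Prop}
    (left : ∀ a b, between a a b) (symm : ∀ {a x b}, between a x b → between b x a)
    (trans : ∀ {a x b c}, between a x b → between a b c → between a x c) {F : Finset α}
    (hF : F.Nonempty)
    (total : ∀ a ∈ F, ∀ x ∈ F, ∀ b ∈ F, between a x b ∨ between a b x ∨ between b a x) :
    ∃ a ∈ F, ∃ b ∈ F, ∀ x ∈ F, between a x b := by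
  induction hF using Finset.Nonempty.cons_induction with
  | singleton a => simpa using left a a
  | cons y F hy _ ih =>
    have hF' : ∀ {x}, x ∈ F → x ∈ F.cons y hy := Finset.mem_cons_of_mem
    have hyF : y ∈ F.cons y hy := Finset.mem_cons_self y F
    obtain ⟨a, ha, b, hb, hab⟩ :=
      ih fun a ha x hx b hb => total a (hF' ha) x (hF' hx) b (hF' hb)
    rcases total a (hF' ha) y hyF b (hF' hb) with hayb | haby | hbay
    · exact ⟨a, hF' ha, b, hF' hb, (Finset.forall_mem_cons hy _).2 ⟨hayb, hab⟩⟩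
    · exact ⟨a, hF' ha, y, hyF, (Finset.forall_mem_cons hy _).2
        ⟨symm (left y a), fun x hx => trans (hab x hx) haby⟩⟩
    · exact ⟨b, hF' hb, y, hyF, (Finset.forall_mem_cons hy _).2
        ⟨symm (left y b), fun x hx => trans (symm (hab x hx)) hbay⟩⟩

theorem IsPacking.not_linked_or_of_not_isBranching {F : Finset (Set V)}
    (hF : IsPacking (IsBranching G h) U F) (hU : (G.induce U).Connected)
    (hUh : ¬ IsBranching G (h + 1) U) {A X B : Set V} (hA : A ∈ F) (hX : X ∈ F) (hB : B ∈ F) :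
    ¬ Linked G (U \ X) A B ∨ ¬ Linked G (U \ B) A X ∨ ¬ Linked G (U \ A) B X := by
  by_contra! ⟨hAB, hAX, hBX⟩
  have hne : A ≠ X ∧ A ≠ B ∧ B ≠ X := by
    refine ⟨?_, ?_, ?_⟩ <;> rintro rfl
    · exact not_linked_diff_left hAB
    · exact not_linked_diff_left hAX
    · exact not_linked_diff_left hAB.symm
  have hmem : ∀ i, ![A, B, X] i ∈ F := by simp [Fin.forall_fin_succ, hA, hB, hX]
  have hinj : Function.Injective ![A, B, X] := by
    simp [Function.Injective, Fin.forall_fin_succ, hne, hne.1.symm, hne.2.1.symm, hne.2.2.symm]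
  refine hUh (.succ hU ![A, B, X] (fun i => hF.subset _ (hmem i)) (fun i => hF.prop _ (hmem i))
    (fun i j hij => hF.disjoint (hmem i) (hmem j) (hinj.ne hij)) ?_)
  simp [Fin.forall_fin_succ, hAB, hAX, hBX, hAB.symm, hAX.symm, hBX.symm]

theorem IsPacking.hasPathOn_card {F : Finset (Set V)} (hF : IsPacking (IsBranching G h) U F)
    (hU : (G.induce U).Connected) (hUh : ¬ IsBranching G (h + 1) U) (hne : F.Nonempty) :
    HasPathOn G F.card := by
  classical
  obtain ⟨A, hA, B, hB, hsep⟩ := exists_forall_between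
    (between := fun A X B => ¬ Linked G (U \ X) A B) (fun _ _ => not_linked_diff_left)
    (fun h => mt Linked.symm h) (fun hAB hAC h => h.diff_or_linked.elim hAC hAB) hne
    (fun _ hA _ hX _ hB => hF.not_linked_or_of_not_isBranching hU hUh hA hX hB)
  obtain ⟨a, ha⟩ := (hF.prop A hA).nonempty
  obtain ⟨b, hb⟩ := (hF.prop B hB).nonempty
  obtain ⟨p, hp⟩ := ReachableIn.of_connected_induce hU (hF.subset A hA ha) (hF.subset B hB hb)
  have hmeet : ∀ X ∈ F, ∃ x ∈ p.bypass.support.toFinset, x ∈ X := by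
    intro X hX
    by_contra! hdisj
    exact hsep X hX ⟨a, ha, b, hb, p.bypass, fun x hx =>
      ⟨hp x (p.support_bypass_subset_support hx), hdisj x (List.mem_toFinset.2 hx)⟩⟩
  have hcard : F.card ≤ p.bypass.length + 1 := calc
    F.card ≤ p.bypass.support.toFinset.card :=
      Finset.card_le_card_of_forall_subsingleton (fun X x => x ∈ X) hmeet
        fun x _ X hX Y hY => hF.disjoint.elim_set hX.1 hY.1 x hX.2 hY.2
    _ ≤ p.bypass.support.length := List.toFinset_card_le _
    _ = p.bypass.length + 1 := p.bypass.length_support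
  exact (hasPathOn_length_succ p.bypass_isPath).mono hcard

end Packing

/-! ### Splitting a graph at a bag -/

section TreeDecomposition

theorem exists_apply_apply_eq_of_isTree {α : Type*} [Finite α] {T : SimpleGraph α}
    (hT : T.IsTree) {next : α → α} (hnext : ∀ x, T.Adj x (next x)) : ∃ x, next (next x) = x := by
  classical
  have := Fintype.ofFinite α
  obtain ⟨x, -, y, -, hxy, hedge⟩ := Finset.exists_ne_map_eq_of_card_lt_of_maps_to
    (s := Finset.univ) (t := T.edgeFinset) (f := fun x => s(x, next x))
    (by rw [Finset.card_univ, ← hT.card_edgeFinset]; exact Nat.lt_succ_self _)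
    (fun x _ => by simpa using hnext x)
  rcases Sym2.eq_iff.1 hedge with ⟨h, -⟩ | ⟨h, h'⟩
  · exact absurd h hxy
  · exact ⟨x, by rw [h', h]⟩

theorem exists_adj_reachableIn_compl_singleton {V : Type*} {G : SimpleGraph V}
    (hG : G.Connected) {x u : V} (hu : u ≠ x) :
    ∃ z, G.Adj x z ∧ ReachableIn G {x}ᶜ z u := by
  obtain ⟨p, hp⟩ := hG.exists_isPath x u
  cases p with
  | nil => exact absurd rfl hu
  | @cons _ z _ hxz p =>
    rw [SimpleGraph.Walk.cons_isPath_iff] at hp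
    exact ⟨z, hxz, p, fun y hy hyx => hp.2 (hyx ▸ hy)⟩

theorem disjoint_componentIn_of_adj {V : Type*} {G : SimpleGraph V} (hG : G.IsAcyclic) {x y : V}
    (hxy : G.Adj x y) : Disjoint (componentIn G {x}ᶜ y) (componentIn G {y}ᶜ x) := by
  rw [Set.disjoint_left]
  rintro v ⟨p, hp⟩ ⟨q, hq⟩
  have hbridge := SimpleGraph.isAcyclic_iff_forall_adj_isBridge.1 hG hxy
  have hmem := SimpleGraph.isBridge_iff_forall_walk_mem_edges.1 hbridge (q.append p.reverse)
  rw [SimpleGraph.Walk.edges_append, List.mem_append, SimpleGraph.Walk.edges_reverse,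
    List.mem_reverse] at hmem
  rcases hmem with h | h
  · exact hq y (q.snd_mem_support_of_mem_edges h) rfl
  · exact hp x (p.fst_mem_support_of_mem_edges h) rfl

theorem exists_disjoint_componentIn_compl_singleton {α : Type*} [Finite α] {T : SimpleGraph α}
    (hT : T.IsTree) {s : α → α} (hs : ∀ x, s x ≠ x) :
    ∃ x y, Disjoint (componentIn T {x}ᶜ (s x)) (componentIn T {y}ᶜ (s y)) := by
  choose next hadj hreach using
    fun x => exists_adj_reachableIn_compl_singleton hT.connected (hs x)
  obtain ⟨x, hx⟩ := exists_apply_apply_eq_of_isTree hT hadj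
  refine ⟨x, next x, ?_⟩
  rw [← (hreach x).componentIn_eq, ← (hreach (next x)).componentIn_eq, hx]
  exact disjoint_componentIn_of_adj hT.isAcyclic (hadj x)

variable {V : Type*} {G : SimpleGraph V}

theorem TreeDecomp.reachableIn_of_mem_bag (D : TreeDecomp G) {x r r' : Fin D.n} {v w : V}
    (h : ReachableIn G (D.bag x)ᶜ v w) (hv : v ∈ D.bag r) (hw : w ∈ D.bag r') :
    ReachableIn D.T {x}ᶜ r r' := by
  have hsame : ∀ {u : V} {r r' : Fin D.n}, u ∉ D.bag x → u ∈ D.bag r → u ∈ D.bag r' →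
      ReachableIn D.T {x}ᶜ r r' := fun {u r r'} hu hr hr' =>
    (ReachableIn.of_connected_induce (D.subtree u) hr hr').mono
      fun q hq hqx => hu (hqx ▸ hq)
  obtain ⟨p, hp⟩ := h
  induction p generalizing r with
  | nil => exact hsame (hp _ (by simp)) hv hw
  | @cons v u w hvu p ih =>
    simp only [SimpleGraph.Walk.support_cons, List.forall_mem_cons] at hp
    obtain ⟨q, hvq, huq⟩ := D.edge_bag v u hvu
    exact (hsame hp.1 hv hvq).trans (ih huq hw hp.2)

theorem TreeDecomp.exists_mem_bag (D : TreeDecomp G) (v : V) : ∃ x, v ∈ D.bag x :=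
  Set.nonempty_coe_sort.1 (D.subtree v).nonempty

theorem TreeDecomp.exists_disjoint_componentIn (D : TreeDecomp G) {v : Fin D.n → V}
    (hv : ∀ x, v x ∉ D.bag x) :
    ∃ x y, Disjoint (componentIn G (D.bag x)ᶜ (v x)) (componentIn G (D.bag y)ᶜ (v y)) := by
  choose s hs using fun x => D.exists_mem_bag (v x)
  obtain ⟨x, y, hxy⟩ := exists_disjoint_componentIn_compl_singleton D.isTree
    (s := s) fun x hx => hv x (by simpa only [hx] using hs x)
  refine ⟨x, y, Set.disjoint_left.2 fun w hwx hwy => ?_⟩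
  obtain ⟨r, hr⟩ := D.exists_mem_bag w
  exact Set.disjoint_left.1 hxy (D.reachableIn_of_mem_bag hwx (hs x) hr)
    (D.reachableIn_of_mem_bag hwy (hs y) hr)

theorem IsPacking.mono {P : Set V → Prop} {U U' : Set V} {F : Finset (Set V)}
    (hF : IsPacking P U F) (hU : U ⊆ U') : IsPacking P U' F :=
  ⟨hF.prop, fun A hA => (hF.subset A hA).trans hU, hF.disjoint⟩

theorem IsPacking.exists_card_eq_add {P : Set V → Prop} (hP : ∀ A, P A → A.Nonempty)
    {U U₁ U₂ : Set V} {F₁ F₂ : Finset (Set V)} (h₁ : IsPacking P U₁ F₁) (h₂ : IsPacking P U₂ F₂)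
    (hU₁ : U₁ ⊆ U) (hU₂ : U₂ ⊆ U) (hdisj : Disjoint U₁ U₂) :
    ∃ F, IsPacking P U F ∧ F.card = F₁.card + F₂.card := by
  classical
  have hA : ∀ A₁ ∈ F₁, ∀ A₂ ∈ F₂, Disjoint A₁ A₂ := fun A₁ hA₁ A₂ hA₂ =>
    hdisj.mono (h₁.subset A₁ hA₁) (h₂.subset A₂ hA₂)
  refine ⟨F₁ ∪ F₂, ⟨?_, ?_, ?_⟩, Finset.card_union_of_disjoint ?_⟩
  · simpa only [Finset.forall_mem_union] using ⟨h₁.prop, h₂.prop⟩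
  · simpa only [Finset.forall_mem_union] using ⟨(h₁.mono hU₁).subset, (h₂.mono hU₂).subset⟩
  · rw [Finset.coe_union, Set.pairwiseDisjoint_union]
    exact ⟨h₁.disjoint, h₂.disjoint, fun A₁ hA₁ A₂ hA₂ _ => hA A₁ hA₁ A₂ hA₂⟩
  · exact Finset.disjoint_left.2 fun A hA₁ hA₂ =>
      (hP A (h₁.prop A hA₁)).ne_empty (disjoint_self.1 (hA A hA₁ A hA₂))

theorem TreeDecomp.exists_bag_isPacking_card_lt (D : TreeDecomp G) {P : Set V → Prop}
    (hP : ∀ A, P A → A.Nonempty) {U : Set V} {m : ℕ}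
    (hU : ∀ F, IsPacking P U F → F.card < 2 * m) :
    ∃ x, ∀ u ∈ U \ D.bag x, ∀ F, IsPacking P (componentIn G (U \ D.bag x) u) F →
      F.card < m := by
  by_contra! hlarge
  choose v hv F hF hcard using hlarge
  obtain ⟨x, y, hxy⟩ := D.exists_disjoint_componentIn fun x => (hv x).2
  have hsub : ∀ x, componentIn G (U \ D.bag x) (v x) ⊆ U := fun x =>
    componentIn_subset.trans Set.sdiff_subset
  have hcompl : ∀ x, componentIn G (U \ D.bag x) (v x) ⊆ componentIn G (D.bag x)ᶜ (v x) :=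
    fun x => componentIn_mono fun _ hw => hw.2
  obtain ⟨F', hF', hcard'⟩ := (hF x).exists_card_eq_add hP (hF y) (hsub x) (hsub y)
    (hxy.mono (hcompl x) (hcompl y))
  have := hU F' hF'
  have := hcard x
  have := hcard y
  omega

instance TreeDecomp.instNonempty : Nonempty (TreeDecomp G) :=
  ⟨{ n := 1
     T := ⊥
     isTree := .of_subsingleton
     bag := fun _ => Set.univ
     edge_bag := fun _ _ _ => ⟨0, trivial, trivial⟩
     subtree := fun v =>
       have : Nonempty {_x : Fin 1 | v ∈ Set.univ} := ⟨⟨0, trivial⟩⟩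
       .of_subsingleton }⟩

theorem exists_treeDecomp_ncard_bag_le {t : ℕ} (h : treewidth G < t) :
    ∃ D : TreeDecomp G, ∀ x, (D.bag x).ncard ≤ t := by
  obtain ⟨D₀⟩ : Nonempty (TreeDecomp G) := inferInstance
  obtain ⟨D, hD⟩ : ∃ D : TreeDecomp G, D.width = treewidth G :=
    Nat.sInf_mem (s := {w | ∃ D : TreeDecomp G, D.width = w}) ⟨_, D₀, rfl⟩
  refine ⟨D, fun x => ?_⟩
  have hx : (D.bag x).ncard ≤ ⨆ y, (D.bag y).ncard :=
    le_ciSup (f := fun y => (D.bag y).ncard) (Set.finite_range _).bddAbove x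
  rw [← hD, TreeDecomp.width] at h
  omega

end TreeDecomposition

/-! ### Ranking graphs of bounded treewidth -/

section Main

variable {V : Type*} [Finite V] {G : SimpleGraph V} {t : ℕ}

theorem TreeDecomp.hasRanking_of_isPacking_card_lt (D : TreeDecomp G)
    (ht : ∀ x, (D.bag x).ncard ≤ t) {P : Set V → Prop} (hP : ∀ A, P A → A.Nonempty) {n : ℕ}
    (hn : ∀ W : Set V, (∀ A ⊆ W, ¬ P A) → HasRanking G W n) (k : ℕ) {U : Set V}
    (hU : ∀ F, IsPacking P U F → F.card < 2 ^ k) : HasRanking G U (n + k * t) := by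
  induction k generalizing U with
  | zero =>
    have hPU : ∀ A ⊆ U, ¬ P A := fun A hA hPA => by
      simpa using hU {A} ⟨by simpa, by simpa, by simp⟩
    simpa using hn U hPU
  | succ k ih =>
    obtain ⟨x, hx⟩ := D.exists_bag_isPacking_card_lt hP (by simpa only [pow_succ'] using hU)
    have hdiff : HasRanking G (U \ D.bag x) (n + k * t) :=
      .of_componentIn fun u hu => ih (hx u hu)
    refine (hdiff.of_diff (D.bag x).toFinite).mono ?_
    calc n + k * t + (D.bag x).ncard ≤ n + k * t + t := Nat.add_le_add_left (ht x) _
      _ = n + (k + 1) * t := by ring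

theorem TreeDecomp.hasRanking_of_not_isBranching (D : TreeDecomp G)
    (ht : ∀ x, (D.bag x).ncard ≤ t) {b : ℕ} (hpath : ¬ HasPathOn G (2 ^ b)) (h : ℕ) {U : Set V}
    (hU : ∀ A ⊆ U, ¬ IsBranching G h A) : HasRanking G U (h * (b * t)) := by
  induction h generalizing U with
  | zero =>
    have hempty : U = ∅ := Set.eq_empty_of_forall_notMem fun u hu =>
      hU _ componentIn_subset (.zero (connected_induce_componentIn hu))
    exact hempty ▸ hasRanking_empty G _
  | succ h ih =>
    rw [Nat.succ_mul]
    refine .of_componentIn fun u hu => D.hasRanking_of_isPacking_card_lt ht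
      (fun _ => IsBranching.nonempty) (fun W => ih) b fun F hF => ?_
    by_contra! hcard
    have hne : F.Nonempty := Finset.card_pos.1 ((Nat.two_pow_pos b).trans_le hcard)
    exact hpath ((hF.hasPathOn_card (connected_induce_componentIn hu)
      (hU _ componentIn_subset) hne).mono hcard)

theorem stmt_1_general {h b : ℕ} (htw : treewidth G < t)
    (hminor : ¬ IsMinor (completeBinaryTree (h + 1)) G) (hpath : ¬ HasPathOn G (2 ^ b)) :
    treedepth G ≤ t * h * b := by
  obtain ⟨D, hD⟩ := exists_treeDecomp_ncard_bag_le htw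
  have hranking : HasRanking G Set.univ (h * (b * t)) :=
    D.hasRanking_of_not_isBranching hD hpath h fun A _ hA => hminor hA.isMinor
  calc treedepth G ≤ h * (b * t) := hranking.treedepth_le
    _ = t * h * b := by ring

end Main

/-- There is a universal constant `C` such that every finite simple graph of treewidth
less than `t`, with no complete binary tree of height `h` as a minor and no path on
`2^b` vertices as a subgraph, has treedepth at most `C * t * h * b`. -/
theorem stmt_1 : ∃ C : ℕ, ∀ (V : Type) [Fintype V] (G : SimpleGraph V) (t h b : ℕ),
    0 < t → 0 < h → 0 < b →
    treewidth G < t → ¬ IsMinor (completeBinaryTree h) G → ¬ HasPathOn G (2 ^ b) →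
    treedepth G ≤ C * t * h * b := by
  refine ⟨1, fun V _ G t h b _ hh _ htw hminor hpath => ?_⟩
  obtain ⟨h, rfl⟩ := Nat.exists_eq_add_one.2 hh
  exact (stmt_1_general htw hminor hpath).trans (by rw [one_mul]; gcongr; exact h.le_succ)
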